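/- If s = (s_{ij}) ∈ ℝ^D satisfies s_{ij} ≥ 0 for all pairs {i,j} with i,j ∈ {1,…,N−1}, then the integral defining the p-adic open string N-point zeta function diverges to +∞: ∫_{ℚ_p^{N−3}∖Λ} ∏_{i=2}^{N−2} |x_i|_p^{s_{1i}} |1−x_i|_p^{s_{(N−1)i}} ∏_{2≤i<j≤N−2} |x_i−x_j|_p^{s_{ij}} ∏ dx_i = +∞. -/

import Mathlib

open MeasureTheory Finset

noncomputable section

instance padicMS (p : ℕ) [Fact p.Prime] : MeasurableSpace ℚ_[p] := borel _
instance padicBS (p : ℕ) [Fact p.Prime] : BorelSpace ℚ_[p] := ⟨rfl⟩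

/-- The closed unit ball of `ℚ_[p]` (i.e. `ℤ_[p]`) as a positive compact subset. -/
def padicBall (p : ℕ) [Fact p.Prime] : TopologicalSpace.PositiveCompacts ℚ_[p] where
  carrier := Metric.closedBall 0 1
  isCompact' := isCompact_closedBall 0 1
  interior_nonempty' := ⟨0, Metric.ball_subset_interior_closedBall (Metric.mem_ball_self one_pos)⟩

/-- The Haar measure on `(ℚ_[p], +)`, normalized so that `ℤ_[p]` has measure `1`. -/
def padicHaar (p : ℕ) [Fact p.Prime] : Measure ℚ_[p] :=
  Measure.addHaarMeasure (padicBall p)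

instance padicHaarSF (p : ℕ) [Fact p.Prime] : SigmaFinite (padicHaar p) := by
  unfold padicHaar; infer_instance

/-- The product of normalized Haar measures on a finite power of `ℚ_[p]`. -/
def padicPi (p : ℕ) [Fact p.Prime] (ι : Type) [Fintype ι] : Measure (ι → ℚ_[p]) :=
  Measure.pi fun _ => padicHaar p

/-- `T = {2, …, N-2}`. -/
def Tset (N : ℕ) : Finset ℕ := Finset.Icc 2 (N - 2)

/-- The ordered pairs `(i, j)` with `i < j` and `i, j ∈ A`. -/
def pairsIn (A : Finset ℕ) : Finset (ℕ × ℕ) := (A ×ˢ A).filter fun q => q.1 < q.2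

/-- The coordinates of a point of `ℚ_p^A`, as a function on `ℕ` (junk value `0` off `A`). -/
def padicCoord {p : ℕ} [Fact p.Prime] {A : Finset ℕ} (x : A → ℚ_[p]) (n : ℕ) : ℚ_[p] :=
  if h : n ∈ A then x ⟨n, h⟩ else 0

/-- The complement of the divisor `Λ` in `ℚ_p^{N-3}`. -/
def ZNset (p N : ℕ) [Fact p.Prime] : Set (↥(Tset N) → ℚ_[p]) :=
  {x | (∀ i, x i ≠ 0 ∧ x i ≠ 1) ∧
    ∀ q ∈ pairsIn (Tset N), padicCoord x q.1 ≠ padicCoord x q.2}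

/-!
Work over a local field `K`. Where `0`, `1` and the coordinates of `x` are at pairwise distance at
least `1`, every factor of the integrand is at least `1`, so it suffices that this region has
infinite measure. If `4 ≤ ‖c‖`, then distinct powers of `c` are at distance at least `3`. Hence
closed unit balls in `ι → K` centred at tuples of distinct powers `c ^ n`, `n ≥ 1`, lie in the
region; raising all exponents simultaneously gives infinitely many disjoint ones, of equal positive
Haar measure.
-/

theorem measure_eq_top_of_separated_closedBall_subset {α E : Type*} [Countable α] [Infinite α]
    [NormedAddCommGroup E] [MeasurableSpace E] [BorelSpace E] (μ : Measure E) [μ.IsAddHaarMeasure]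
    {u : α → E} {r : ℝ} (hr : 0 < r) (hu : Pairwise fun k l => 2 * r < dist (u k) (u l))
    {S : Set E} (hS : ∀ k, Metric.closedBall (u k) r ⊆ S) : μ S = ⊤ := by
  have hdisj : Pairwise (Function.onFun Disjoint fun k => Metric.closedBall (u k) r) :=
    fun k l hkl => Metric.closedBall_disjoint_closedBall (by linarith [hu hkl])
  have hunion : μ (⋃ k, Metric.closedBall (u k) r) = ⊤ :=
    calc μ (⋃ k, Metric.closedBall (u k) r)
      _ = ∑' k, μ (Metric.closedBall (u k) r) :=
        measure_iUnion hdisj fun _ => Metric.isClosed_closedBall.measurableSet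
      _ = ∑' _ : α, μ (Metric.closedBall 0 r) := by simp only [Measure.addHaar_closedBall_center]
      _ = ⊤ := ENNReal.tsum_const_eq_top_of_ne_zero (Metric.measure_closedBall_pos μ 0 hr).ne'
  exact measure_mono_top (Set.iUnion_subset hS) hunion

lemma norm_sub_one_le_dist_pow {K : Type*} [NormedDivisionRing K] {c : K} (hc : 1 ≤ ‖c‖)
    {m n : ℕ} (hmn : m ≠ n) : ‖c‖ - 1 ≤ dist (c ^ m) (c ^ n) := by
  wlog hlt : n < m generalizing m n
  · rw [dist_comm]
    exact this hmn.symm (by omega)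
  calc ‖c‖ - 1
    _ ≤ ‖c‖ ^ n * (‖c‖ - 1) := le_mul_of_one_le_left (sub_nonneg.2 hc) (one_le_pow₀ hc)
    _ = ‖c‖ ^ (n + 1) - ‖c‖ ^ n := by ring
    _ ≤ ‖c‖ ^ m - ‖c‖ ^ n := by gcongr; exact hlt
    _ = ‖c ^ m‖ - ‖c ^ n‖ := by simp only [norm_pow]
    _ ≤ dist (c ^ m) (c ^ n) := dist_eq_norm (c ^ m) (c ^ n) ▸ norm_sub_norm_le _ _

section KobaNielsen

/-- The complement in `K ^ ι` of the divisor `Λ`, on which a coordinate is `0` or `1` or two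
coordinates coincide. -/
def divisorCompl (ι K : Type*) [Zero K] [One K] : Set (ι → K) :=
  {x | (∀ i, x i ≠ 0 ∧ x i ≠ 1) ∧ Function.Injective x}

/-- The points of `K ^ ι` which together with `0` and `1` are at pairwise distance at least `1`: a
region on which the Koba–Nielsen integrand with nonnegative exponents is bounded below. -/
def unitSeparated (ι K : Type*) [NormedRing K] : Set (ι → K) :=
  {x | (∀ i, 1 ≤ ‖x i‖ ∧ 1 ≤ ‖1 - x i‖) ∧ Pairwise fun i j => 1 ≤ ‖x i - x j‖}

/-- The Koba–Nielsen integrand of the open string amplitude at `x`. The punctures `0` and `1` carry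
the exponents `a` and `b` (`s_{1i}` and `s_{(N-1)i}` in the `N`-point zeta function). -/
def kobaNielsen {ι K : Type*} [Fintype ι] [LinearOrder ι] [NormedRing K]
    (a b : ι → ℝ) (s : ι → ι → ℝ) (x : ι → K) : ℝ :=
  (∏ i, ‖x i‖ ^ a i * ‖1 - x i‖ ^ b i) *
    ∏ q : ι × ι with q.1 < q.2, ‖x q.1 - x q.2‖ ^ s q.1 q.2

lemma unitSeparated_subset_divisorCompl (ι K : Type*) [NormedRing K] :
    unitSeparated ι K ⊆ divisorCompl ι K := by
  intro x ⟨hpuncture, hpair⟩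
  have ne_of_one_le {y z : K} (h : 1 ≤ ‖y - z‖) : y ≠ z :=
    sub_ne_zero.1 (norm_pos_iff.1 (one_pos.trans_le h))
  refine ⟨fun i => ⟨norm_pos_iff.1 (one_pos.trans_le (hpuncture i).1),
    (ne_of_one_le (hpuncture i).2).symm⟩, fun i j hij => ?_⟩
  by_contra hne
  exact ne_of_one_le (hpair hne) hij

lemma isClosed_unitSeparated (ι K : Type*) [NormedRing K] : IsClosed (unitSeparated ι K) := by
  simp only [unitSeparated, Pairwise, Set.ofPred_and, Set.ofPred_forall]
  refine .inter (isClosed_iInter fun i => .inter ?_ ?_)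
    (isClosed_iInter fun i => isClosed_iInter fun j => isClosed_iInter fun _ => ?_)
  all_goals exact isClosed_le (by fun_prop) (by fun_prop)

lemma one_le_kobaNielsen {ι K : Type*} [Fintype ι] [LinearOrder ι] [NormedRing K]
    {a b : ι → ℝ} {s : ι → ι → ℝ} (ha : ∀ i, 0 ≤ a i) (hb : ∀ i, 0 ≤ b i)
    (hs : ∀ i j, i < j → 0 ≤ s i j) {x : ι → K} (hx : x ∈ unitSeparated ι K) :
    1 ≤ kobaNielsen a b s x := by
  obtain ⟨hpuncture, hpair⟩ := hx
  refine one_le_mul_of_one_le_of_one_le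
    (Finset.one_le_prod fun i _ => one_le_mul_of_one_le_of_one_le ?_ ?_)
    (Finset.one_le_prod fun q hq => ?_)
  · exact Real.one_le_rpow (hpuncture i).1 (ha i)
  · exact Real.one_le_rpow (hpuncture i).2 (hb i)
  · have hlt : q.1 < q.2 := (Finset.mem_filter.1 hq).2
    exact Real.one_le_rpow (hpair hlt.ne) (hs _ _ hlt)

lemma closedBall_pow_subset_unitSeparated {ι K : Type*} [Fintype ι] [NormedDivisionRing K]
    {c : K} (hc : 4 ≤ ‖c‖) {n : ι → ℕ} (hn : Function.Injective n) (hn0 : ∀ i, n i ≠ 0) :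
    Metric.closedBall (fun i => c ^ n i) 1 ⊆ unitSeparated ι K := by
  intro x hx
  have hx_near (i : ι) : ‖x i - c ^ n i‖ ≤ 1 := by
    simpa only [dist_eq_norm] using (dist_pi_le_iff zero_le_one).1 hx i
  have hpow {k l : ℕ} (hkl : k ≠ l) : 3 ≤ ‖c ^ k - c ^ l‖ := by
    rw [← dist_eq_norm]
    linarith [norm_sub_one_le_dist_pow (c := c) (by linarith) hkl]
  refine ⟨fun i => ⟨?_, ?_⟩, fun i j hij => ?_⟩
  · have hcenter : 4 ≤ ‖c ^ n i‖ := by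
      rw [norm_pow]
      exact hc.trans (le_self_pow₀ (by linarith) (hn0 i))
    linarith [hx_near i, norm_sub_norm_le (c ^ n i) (x i), norm_sub_rev (x i) (c ^ n i)]
  · have hcenter : 3 ≤ ‖1 - c ^ n i‖ := by simpa only [pow_zero] using hpow (hn0 i).symm
    linarith [hx_near i, norm_sub_le_norm_sub_add_norm_sub 1 (x i) (c ^ n i)]
  · have hcenter : 3 ≤ ‖c ^ n i - c ^ n j‖ := hpow (hn.ne hij)
    linarith [hx_near i, hx_near j, norm_sub_rev (x i) (c ^ n i),
      norm_sub_le_norm_sub_add_norm_sub (c ^ n i) (x i) (c ^ n j),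
      norm_sub_le_norm_sub_add_norm_sub (x i) (x j) (c ^ n j)]

variable {ι K : Type*} [Fintype ι] [Nonempty ι] [NontriviallyNormedField K] [ProperSpace K]
  [MeasurableSpace K] [BorelSpace K] (μ : Measure K) [μ.IsAddHaarMeasure]

lemma measure_pi_unitSeparated : Measure.pi (fun _ : ι => μ) (unitSeparated ι K) = ⊤ := by
  obtain ⟨c, hc⟩ := NormedField.exists_lt_norm K 4
  obtain ⟨e, he⟩ := Countable.exists_injective_nat ι
  refine measure_eq_top_of_separated_closedBall_subset _ (u := fun k i => c ^ (k + e i + 1))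
    one_pos (fun k l hkl => ?_) fun k => closedBall_pow_subset_unitSeparated hc.le
      (fun i j hij => he (by simpa using hij)) fun _ => Nat.succ_ne_zero _
  obtain ⟨i⟩ := ‹Nonempty ι›
  calc 2 * 1
    _ < ‖c‖ - 1 := by linarith
    _ ≤ dist (c ^ (k + e i + 1)) (c ^ (l + e i + 1)) :=
      norm_sub_one_le_dist_pow (by linarith) (by omega)
    _ ≤ dist (fun j => c ^ (k + e j + 1)) fun j => c ^ (l + e j + 1) :=
      dist_le_pi_dist (fun j => c ^ (k + e j + 1)) (fun j => c ^ (l + e j + 1)) i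

theorem ZN_diverges_of_nonneg_general [LinearOrder ι] {a b : ι → ℝ} {s : ι → ι → ℝ}
    (ha : ∀ i, 0 ≤ a i) (hb : ∀ i, 0 ≤ b i) (hs : ∀ i j, i < j → 0 ≤ s i j) :
    ∫⁻ x in divisorCompl ι K,
      ENNReal.ofReal (kobaNielsen a b s x) ∂Measure.pi (fun _ => μ) = ⊤ := by
  rw [eq_top_iff]
  calc ⊤
    _ = ∫⁻ _ in unitSeparated ι K, 1 ∂Measure.pi (fun _ => μ) := by
      rw [setLIntegral_one, measure_pi_unitSeparated]
    _ ≤ ∫⁻ x in unitSeparated ι K, ENNReal.ofReal (kobaNielsen a b s x) ∂Measure.pi (fun _ => μ) :=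
      setLIntegral_mono' (isClosed_unitSeparated ι K).measurableSet fun _ hx =>
        ENNReal.one_le_ofReal.2 (one_le_kobaNielsen ha hb hs hx)
    _ ≤ ∫⁻ x in divisorCompl ι K, ENNReal.ofReal (kobaNielsen a b s x) ∂Measure.pi (fun _ => μ) :=
      lintegral_mono_set (unitSeparated_subset_divisorCompl ι K)

end KobaNielsen

instance isAddHaarMeasure_padicHaar (p : ℕ) [Fact p.Prime] : (padicHaar p).IsAddHaarMeasure := by
  unfold padicHaar
  infer_instance

lemma padicCoord_coe {p : ℕ} [Fact p.Prime] {A : Finset ℕ} (x : A → ℚ_[p]) (i : A) :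
    padicCoord x i = x i :=
  dif_pos i.2

lemma prod_pairsIn {M : Type*} [CommMonoid M] (A : Finset ℕ) (f : ℕ → ℕ → M) :
    ∏ q ∈ pairsIn A, f q.1 q.2 = ∏ q : A × A with q.1 < q.2, f q.1 q.2 := by
  simp only [pairsIn, prod_filter, prod_product, ← univ_product_univ, ← Subtype.coe_lt_coe,
    ← prod_coe_sort A]

lemma ZNset_eq_divisorCompl (p N : ℕ) [Fact p.Prime] :
    ZNset p N = divisorCompl (Tset N) ℚ_[p] := by
  ext x
  refine and_congr_right fun _ => ⟨fun h => ?_, fun h q hq heq => ?_⟩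
  · refine .of_lt_imp_ne fun i j hij => ?_
    simpa only [padicCoord_coe] using h (i, j) (by simpa [pairsIn] using hij)
  · obtain ⟨hmem, hlt⟩ := mem_filter.1 hq
    obtain ⟨h1, h2⟩ := mem_product.1 hmem
    have hij : (⟨q.1, h1⟩ : Tset N) = ⟨q.2, h2⟩ :=
      h (by simpa only [padicCoord, dif_pos h1, dif_pos h2] using heq)
    exact hlt.ne (Subtype.ext_iff.1 hij)

lemma ZN_integrand_eq_kobaNielsen {p : ℕ} [Fact p.Prime] {A : Finset ℕ} (a b : ℕ → ℝ)
    (s : ℕ → ℕ → ℝ) (x : A → ℚ_[p]) :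
    (∏ i ∈ A, ‖padicCoord x i‖ ^ a i * ‖1 - padicCoord x i‖ ^ b i) *
        ∏ q ∈ pairsIn A, ‖padicCoord x q.1 - padicCoord x q.2‖ ^ s q.1 q.2 =
      kobaNielsen (fun i : A => a i) (fun i => b i) (fun i j => s i j) x := by
  rw [prod_pairsIn A fun i j => ‖padicCoord x i - padicCoord x j‖ ^ s i j, ← prod_coe_sort A]
  simp only [padicCoord_coe, kobaNielsen]

/-- If `s_{ij} ≥ 0` for all pairs `{i,j}` with `i, j ∈ {1, …, N-1}`, then the integral
defining the `p`-adic open string `N`-point zeta function diverges to `+∞`. -/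
theorem ZN_diverges_of_nonneg (p : ℕ) [Fact p.Prime] (N : ℕ) (hN : 4 ≤ N)
    (s : ℕ → ℕ → ℝ) (hsym : ∀ i j, s i j = s j i)
    (hpos : ∀ i ∈ Finset.Icc 1 (N - 1), ∀ j ∈ Finset.Icc 1 (N - 1), 0 ≤ s i j) :
    ∫⁻ x in ZNset p N,
      ENNReal.ofReal
        ((∏ i ∈ Tset N, ‖padicCoord x i‖ ^ s 1 i * ‖1 - padicCoord x i‖ ^ s (N - 1) i) *
          ∏ q ∈ pairsIn (Tset N), ‖padicCoord x q.1 - padicCoord x q.2‖ ^ s q.1 q.2)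
      ∂(padicPi p ↥(Tset N)) = ⊤ := by
  have : Nonempty (Tset N) := ⟨2, mem_Icc.2 (by omega)⟩
  have hmem (i : Tset N) : (i : ℕ) ∈ Icc 1 (N - 1) := by
    have := mem_Icc.1 i.2
    exact mem_Icc.2 (by omega)
  simp only [ZN_integrand_eq_kobaNielsen, ZNset_eq_divisorCompl]
  exact ZN_diverges_of_nonneg_general (padicHaar p)
    (fun i => hpos 1 (mem_Icc.2 (by omega)) i (hmem i))
    (fun i => hpos (N - 1) (mem_Icc.2 (by omega)) i (hmem i))
    (fun i j _ => hpos i (hmem i) j (hmem j))
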